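/- Cayley polytopes of pairs of polygons with nef relation are normal: let F, G be lattice polygons in ℝ² such that F corresponds to an ample line bundle and G to a nef line bundle on the same nonsingular toric surface (equivalently: F and G have normal fans where the fan of F refines that of G and F is 2-dimensional with smooth normal fan). Then the lattice polytope P = Conv{F×{0}, G×{1}} ⊂ ℝ³ is normal. -/

import Mathlib

open scoped Pointwise

def IsLatticePt {d : ℕ} (x : Fin d → ℝ) : Prop := ∀ i, ∃ z : ℤ, x i = (z : ℝ)

def IsLatticePolytope {d : ℕ} (P : Set (Fin d → ℝ)) : Prop :=
  ∃ V : Finset (Fin d → ℝ), V.Nonempty ∧ (∀ v ∈ V, IsLatticePt v) ∧ P = convexHull ℝ ↑V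

def IsNormalPolytope {d : ℕ} (P : Set (Fin d → ℝ)) : Prop :=
  ∀ n : ℕ, 1 ≤ n → ∀ x ∈ (n : ℝ) • P, IsLatticePt x →
    ∃ f : Fin n → (Fin d → ℝ), (∀ i, f i ∈ P ∧ IsLatticePt (f i)) ∧ x = ∑ i, f i

def P1 : Set (Fin 3 → ℝ) := convexHull ℝ {![0,0,0], ![1,0,0], ![0,1,0], ![0,0,1]}

def dot2 (x y : Fin 2 → ℝ) : ℝ := ∑ i, x i * y i

def normalCone (P : Set (Fin 2 → ℝ)) (u : Fin 2 → ℝ) : Set (Fin 2 → ℝ) :=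
  {y | ∀ x ∈ P, dot2 x y ≤ dot2 u y}

/-- The normal fan of `A` refines the normal fan of `B`: every normal cone of `A`
is contained in some normal cone of `B`. -/
def FanRefines (A B : Set (Fin 2 → ℝ)) : Prop :=
  ∀ u ∈ A, ∃ v ∈ B, normalCone A u ⊆ normalCone B v

/-- At every vertex the primitive edge directions form a ℤ-basis of ℤ². -/
def IsSmoothPolygon (F : Set (Fin 2 → ℝ)) : Prop :=
  ∀ u ∈ Set.extremePoints ℝ F, ∃ m₁ m₂ : Fin 2 → ℤ,
    (m₁ 0 * m₂ 1 - m₁ 1 * m₂ 0 = 1 ∨ m₁ 0 * m₂ 1 - m₁ 1 * m₂ 0 = -1) ∧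
    {y : Fin 2 → ℝ | ∃ t : ℝ, ∃ x ∈ F, 0 ≤ t ∧ y = t • (x - u)} =
      {y : Fin 2 → ℝ | ∃ a b : ℝ, 0 ≤ a ∧ 0 ≤ b ∧
        y = a • (fun i => (m₁ i : ℝ)) + b • (fun i => (m₂ i : ℝ))}

def emb (v : Fin 2 → ℝ) (t : ℝ) : Fin 3 → ℝ := ![v 0, v 1, t]

def cayley (F G : Set (Fin 2 → ℝ)) : Set (Fin 3 → ℝ) :=
  convexHull ℝ ((fun v => emb v 0) '' F ∪ (fun v => emb v 1) '' G)

/-!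
Let `m` be a lattice point of `F + G`. A splitting of `m` as a lattice point `x` of `F` plus
one of `G` is an integer solution of the inequalities `x ⬝ᵥ ν ≤ max_F ν` and
`(m - x) ⬝ᵥ ν ≤ max_G ν`, where `ν` runs over the edge normals of `F`; by refinement these also cut
out `G`. If there is no solution, relax an irredundant infeasible subsystem to a tight one.
Each of the two groups of inequalities then keeps at least two constraints, since otherwise a
linear functional would separate `F` from `m - G`. So two witnesses come from each group, and
as no witnesses have a lattice point as an average with all weights below one, these four are
the vertices of a parallelogram. If witnesses of the same group span sides of it, the
functional constant on those sides separates `F` from `m - G`, which is absurd. If they span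
its diagonals, the two edges of `F` on which the constraints of the second group are constant
yield two opposite strict inequalities.

A lattice point of a multiple of the Cayley polytope lies in `p • F + q • G` for natural numbers `p`
and `q`, so lattice points of `F` and `G` can be peeled off it one at a time, by Carathéodory's
theorem if `p = 0` and `G` is degenerate.
-/

/-- Rotation by a quarter turn. It turns edge directions into edge normals, and `rot x ⬝ᵥ y` is the
determinant of `x` and `y`. -/
def rot {R : Type*} [Neg R] (x : Fin 2 → R) : Fin 2 → R := ![-x 1, x 0]

theorem rot_dotProduct {R : Type*} [CommRing R] (x y : Fin 2 → R) :
    rot x ⬝ᵥ y = x 0 * y 1 - x 1 * y 0 := by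
  simp only [rot, Matrix.vec2_dotProduct, Matrix.cons_val_zero, Matrix.cons_val_one]
  ring

theorem rot_neg {R : Type*} [CommRing R] (x : Fin 2 → R) : rot (-x) = -rot x := by
  simp [rot]

theorem rot_eq_zero {R : Type*} [CommRing R] {x : Fin 2 → R} : rot x = 0 ↔ x = 0 := by
  simp [rot, funext_iff, Fin.forall_fin_two, and_comm]

theorem rot_dotProduct_rot {R : Type*} [CommRing R] (x y : Fin 2 → R) :
    rot x ⬝ᵥ rot y = x ⬝ᵥ y := by
  simp only [rot, Matrix.vec2_dotProduct, Matrix.cons_val_zero, Matrix.cons_val_one]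
  ring

theorem rot_dotProduct_self {R : Type*} [CommRing R] (x : Fin 2 → R) : rot x ⬝ᵥ x = 0 := by
  rw [rot_dotProduct]
  ring

theorem rot_dotProduct_smul_eq_sub {R : Type*} [CommRing R] (x y v : Fin 2 → R) :
    (rot x ⬝ᵥ y) • v = (y ⬝ᵥ v) • rot x - (x ⬝ᵥ v) • rot y := by
  refine funext (Fin.forall_fin_two.2 ⟨?_, ?_⟩) <;>
    simp only [rot, Matrix.vec2_dotProduct, Pi.sub_apply, Pi.smul_apply, smul_eq_mul,
      Matrix.cons_val_zero, Matrix.cons_val_one] <;> ring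

theorem rot_dotProduct_smul {R : Type*} [CommRing R] (x y v : Fin 2 → R) :
    (rot x ⬝ᵥ y) • v = (rot v ⬝ᵥ y) • x + (rot x ⬝ᵥ v) • y := by
  refine funext (Fin.forall_fin_two.2 ⟨?_, ?_⟩) <;>
    simp only [rot_dotProduct, Pi.add_apply, Pi.smul_apply, smul_eq_mul] <;> ring

theorem neg_of_mul_add_mul_neg {R : Type*} [CommRing R] [LinearOrder R] [IsStrictOrderedRing R]
    {a b c d x y : R} (hb : b < 0) (hd : 0 < d) (hdet : b * c ≤ a * d)
    (hab : a * x + b * y < 0) (hcd : c * x + d * y < 0) : x < 0 := by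
  have hdetx : (a * d - b * c) * x < 0 := by
    linear_combination (mul_neg_of_pos_of_neg hd hab) + (mul_neg_of_pos_of_neg (neg_pos.2 hb) hcd)
  exact neg_of_mul_neg_right hdetx (sub_nonneg.2 hdet)

theorem mul_lt_mul_of_chord {M : Type*} [AddCommGroup M] {α₁ α₂ β : Module.Dual ℤ M}
    {u₁ u₂ e v : M} (hspan : ∀ y : M, ∃ s t : ℤ, y = s • u₁ + t • u₂)
    (h₁₁ : 0 < α₁ u₁) (h₁₂ : α₁ u₂ < 0) (h₂₁ : α₂ u₁ < 0) (h₂₂ : 0 < α₂ u₂)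
    (hβ₁ : β u₁ < 0) (hβ₂ : β u₂ < 0) (hv : v ≠ 0) (hβv : β v = 0) (hβe : β e < 0)
    (he₁ : α₁ e < α₁ u₁) (hev₁ : α₁ (e + v) < α₁ u₁) (he₂ : α₂ e < α₂ u₂)
    (hev₂ : α₂ (e + v) < α₂ u₂) : α₁ u₁ * α₂ u₂ < α₁ u₂ * α₂ u₁ := by
  obtain ⟨s, t, rfl⟩ := hspan v
  wlog hs : 0 < s generalizing e s t
  · have hneg : (-s) • u₁ + (-t) • u₂ = -(s • u₁ + t • u₂) := by module
    have hs' : s ≠ 0 := by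
      rintro rfl
      have ht : t = 0 := by simpa [hβ₂.ne] using hβv
      simp [ht] at hv
    refine this (e := e + (s • u₁ + t • u₂)) ?_ hev₁ hev₂ (-s) (-t) ?_ ?_ ?_ ?_ (by lia)
    · rwa [map_add, hβv, add_zero]
    · rwa [hneg, neg_ne_zero]
    · rw [hneg, map_neg, hβv, neg_zero]
    · rwa [hneg, add_neg_cancel_right]
    · rwa [hneg, add_neg_cancel_right]
  have ht : t < 0 := by
    simp only [map_add, map_smul, smul_eq_mul] at hβv
    by_contra! ht
    nlinarith [mul_neg_of_pos_of_neg hs hβ₁, mul_nonpos_of_nonneg_of_nonpos ht hβ₂.le]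
  obtain ⟨x, y, rfl⟩ := hspan e
  simp only [map_add, map_smul, smul_eq_mul] at hβe he₁ hev₁ he₂ hev₂
  -- Otherwise `e = x • u₁ + y • u₂` has `x < 0` and `y ≤ 0`, whence `0 ≤ β e`.
  by_contra! hle
  have h₁ : α₁ u₁ * x + α₁ u₂ * (y - 1) < 0 := by nlinarith
  have h₂ : α₂ u₁ * x + α₂ u₂ * (y - 1) < 0 := by linarith
  have hx : x < 0 := neg_of_mul_add_mul_neg h₁₂ h₂₂ hle h₁ h₂
  have hy : y - 1 < 0 := neg_of_mul_add_mul_neg (a := α₂ u₂) (c := α₁ u₂) (y := x) h₂₁ h₁₁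
    (by linarith) (by linarith) (by linarith)
  nlinarith

/-- A system of integer inequalities `L j x ≤ r j` is tight if it is infeasible and each constraint
`j` has a witness `z j` that violates `j` alone, by exactly one. Relaxing an irredundant infeasible
system as far as possible produces such systems, as in the proof of Doignon's theorem. -/
structure IsTight {κ X : Type*} (L : κ → X → ℤ) (r : κ → ℤ) (z : κ → X) : Prop where
  infeasible : ∀ x, ∃ j, r j < L j x
  apply_self : ∀ j, L j (z j) = r j + 1
  apply_le : ∀ {j k}, j ≠ k → L j (z k) ≤ r j

section Existence

variable {κ X : Type*} [Finite κ] {L : κ → X → ℤ} {r : κ → ℤ}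

theorem exists_irredundant_infeasible (h : ∀ x, ∃ j, r j < L j x) :
    ∃ T : Set κ, (∀ x, ∃ j ∈ T, r j < L j x) ∧ ∀ j ∈ T, ∃ x, ∀ k ∈ T, k ≠ j → L k x ≤ r k := by
  obtain ⟨T, hT⟩ := exists_minimal_of_wellFoundedLT
    (fun T : Set κ => ∀ x, ∃ j ∈ T, r j < L j x) ⟨Set.univ, by simpa using h⟩
  refine ⟨T, hT.prop, fun j hj => ?_⟩
  by_contra! hne
  have hmin : T ≤ T \ {j} :=
    hT.le_of_le (fun x => by simpa [and_assoc] using hne x) Set.sdiff_subset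
  exact (hmin hj).2 rfl

theorem exists_isTight_of_irredundant (h : ∀ x, ∃ j, r j < L j x)
    (hirr : ∀ j, ∃ x, ∀ k, k ≠ j → L k x ≤ r k) :
    ∃ r' z, r ≤ r' ∧ IsTight L r' z := by
  classical
  have := Fintype.ofFinite κ
  choose x hx using hirr
  let R : Set (κ → ℤ) := {r' | r ≤ r' ∧ ∀ y, ∃ j, r' j < L j y}
  have hbdd : R ⊆ Set.Icc r (fun j => L j (x j)) := by
    refine fun r' ⟨hle, hr'⟩ => ⟨hle, fun j => ?_⟩
    obtain ⟨k, hk⟩ := hr' (x j)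
    obtain rfl : k = j := by
      by_contra hkj
      exact (hk.trans_le (hx j k hkj)).not_ge (hle k)
    exact hk.le
  obtain ⟨r', hle, hmax⟩ := ((Set.finite_Icc _ _).subset hbdd).exists_le_maximal
    (show r ∈ R from ⟨le_rfl, h⟩)
  have hrelax : ∀ j, ∃ y, L j y ≤ r' j + 1 ∧ ∀ k, k ≠ j → L k y ≤ r' k := by
    intro j
    by_contra! hj
    have hup : r' ≤ Function.update r' j (r' j + 1) := by simp
    have hmem : Function.update r' j (r' j + 1) ∈ R := by
      refine ⟨hle.trans hup, fun y => ?_⟩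
      by_cases hy : L j y ≤ r' j + 1
      · obtain ⟨k, hkj, hk⟩ := hj y hy
        exact ⟨k, by simpa [hkj] using hk⟩
      · exact ⟨j, by simpa using hy⟩
    have := hmax.le_of_ge hmem hup j
    simp at this
  choose z hz hz' using hrelax
  refine ⟨r', z, hle, hmax.prop.2, fun j => le_antisymm (hz j) ?_, fun hjk => hz' _ _ hjk⟩
  obtain ⟨k, hk⟩ := hmax.prop.2 (z j)
  obtain rfl : k = j := by
    by_contra hkj
    exact hk.not_ge (hz' j k hkj)
  exact hk

theorem exists_isTight (h : ∀ x, ∃ j, r j < L j x) :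
    ∃ (T : Set κ) (r' : T → ℤ) (z : T → X),
      (∀ j : T, r j ≤ r' j) ∧ IsTight (fun j : T => L j) r' z := by
  obtain ⟨T, hT, hirr⟩ := exists_irredundant_infeasible h
  obtain ⟨r', z, hle, htight⟩ := exists_isTight_of_irredundant
    (L := fun j : T => L j) (r := fun j : T => r j) (by simpa using hT)
    (by simpa [Subtype.ext_iff] using hirr)
  exact ⟨T, r', z, hle, htight⟩

end Existence

namespace IsTight

section Module

variable {κ M : Type*} [AddCommGroup M] {L : κ → Module.Dual ℤ M} {r : κ → ℤ} {z : κ → M}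

theorem smul_ne_sum_smul (h : IsTight (fun j => L j) r z) {ι : Type*} [Fintype ι] {f : ι → κ}
    (hf : Function.Injective f) {c : ι → ℤ} {D : ℤ} (hD : 0 < D) (hc : ∀ i, 0 ≤ c i)
    (hcD : ∀ i, c i < D) (hsum : ∑ i, c i = D) (x : M) : D • x ≠ ∑ i, c i • z (f i) := by
  classical
  -- At an average of witnesses with all weights below one, no constraint is exceeded by one.
  intro hx
  obtain ⟨l, hl⟩ := h.infeasible x
  have hterm : ∀ i, c i * L l (z (f i)) ≤ c i * r l + if f i = l then c i else 0 := by
    intro i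
    split_ifs with hil
    · rw [← hil, h.apply_self, mul_add, mul_one]
    · simpa using mul_le_mul_of_nonneg_left (h.apply_le (Ne.symm hil)) (hc i)
  have hexcess : (∑ i, if f i = l then c i else 0) < D := by
    by_cases hl' : ∃ i, f i = l
    · obtain ⟨i, rfl⟩ := hl'
      simpa [hf.eq_iff] using hcD i
    · push Not at hl'
      simpa [hl'] using hD
  have : D * L l x < D * (r l + 1) := by
    calc D * L l x = ∑ i, c i * L l (z (f i)) := by simpa using congrArg (L l) hx
      _ ≤ ∑ i, (c i * r l + if f i = l then c i else 0) := Finset.sum_le_sum fun i _ => hterm i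
      _ < D * r l + D := by rw [Finset.sum_add_distrib, ← Finset.sum_mul, hsum]; gcongr
      _ = D * (r l + 1) := by ring
  exact (lt_of_mul_lt_mul_left this hD.le).not_ge hl

theorem add_ne_two_smul (h : IsTight (fun j => L j) r z) {i j : κ} (hij : i ≠ j) (x : M) :
    z i + z j ≠ (2 : ℤ) • x := by
  have hf : Function.Injective ![i, j] := by
    simp [Function.Injective, Fin.forall_fin_two, hij, hij.symm]
  simpa using (h.smul_ne_sum_smul hf (c := ![1, 1]) (D := 2) (by simp) (by simp) (by simp)
    (by simp) x).symm

theorem sub_ne_two_smul (h : IsTight (fun j => L j) r z) {i j : κ} (hij : i ≠ j) (x : M) :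
    z i - z j ≠ (2 : ℤ) • x := fun hx =>
  h.add_ne_two_smul hij (x + z j) (by linear_combination (norm := module) hx)

theorem smul_ne_add_add (h : IsTight (fun j => L j) r z) {i j k : κ} (hij : i ≠ j) (hik : i ≠ k)
    (hjk : j ≠ k) {D a b c : ℤ} (hD : 0 < D) (ha : 0 ≤ a) (hb : 0 ≤ b) (hc : 0 ≤ c)
    (haD : a < D) (hbD : b < D) (hcD : c < D) (hsum : a + b + c = D) (x : M) :
    D • x ≠ a • z i + b • z j + c • z k := by
  have hf : Function.Injective ![i, j, k] := by
    simp [Function.Injective, Fin.forall_fin_succ, *, Ne.symm]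
  simpa [Fin.sum_univ_three] using h.smul_ne_sum_smul hf (c := ![a, b, c]) hD
    (by simp [Fin.forall_fin_succ, *]) (by simp [Fin.forall_fin_succ, *])
    (by simp [Fin.sum_univ_three, hsum]) x

theorem smul_ne_smul_sub_add_smul_sub (h : IsTight (fun j => L j) r z) {i j k : κ} (hij : i ≠ j)
    (hik : i ≠ k) (hjk : j ≠ k) {D a b : ℤ} (ha : 0 ≤ a) (hb : 0 ≤ b) (haD : a < D)
    (hbD : b < D) (hab : 0 < a + b) (y : M) :
    D • y ≠ a • (z j - z i) + b • (z k - z i) := by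
  intro hy
  rcases le_or_gt (a + b) D with hle | hlt
  · refine h.smul_ne_add_add hij hik hjk (a := D - a - b) (b := a) (c := b) (D := D)
      (by lia) (by lia) ha hb (by lia) haD hbD (by ring) (y + z i) ?_
    linear_combination (norm := module) hy
  · refine h.smul_ne_add_add hij hik hjk (a := a + b - D) (b := D - a) (c := D - b) (D := D)
      (by lia) (by lia) (by lia) (by lia) (by lia) (by lia) (by lia) (by ring)
      (z j + z k - z i - y) ?_
    linear_combination (norm := module) -hy

theorem dvd_of_smul_eq (h : IsTight (fun j => L j) r z) {i j k : κ} (hij : i ≠ j) (hik : i ≠ k)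
    (hjk : j ≠ k) {D a b : ℤ} {y : M} (hD : D ≠ 0)
    (hy : D • y = a • (z j - z i) + b • (z k - z i)) : D ∣ a ∧ D ∣ b := by
  wlog hpos : 0 < D generalizing D y
  · simpa using this (neg_ne_zero.2 hD) (y := -y) (by simpa using hy) (by lia)
  have ha := a.emod_nonneg hD
  have hb := b.emod_nonneg hD
  rw [Int.dvd_iff_emod_eq_zero, Int.dvd_iff_emod_eq_zero]
  by_contra hne
  refine h.smul_ne_smul_sub_add_smul_sub hij hik hjk ha hb (a.emod_lt_of_pos hpos)
    (b.emod_lt_of_pos hpos) (by lia) (y - (a / D) • (z j - z i) - (b / D) • (z k - z i)) ?_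
  rw [Int.emod_def, Int.emod_def]
  linear_combination (norm := module) hy

theorem isUnit_of_eq_add_add (h : IsTight (fun j => L j) r z) {i j k l : κ} (hij : i ≠ j)
    (hil : i ≠ l) (hjl : j ≠ l) {a b c : ℤ} (hsum : a + b + c = 1)
    (hz : z l = a • z i + b • z j + c • z k) : IsUnit c := by
  obtain rfl : a = 1 - b - c := by lia
  rcases eq_or_ne c 0 with rfl | hc
  · exfalso
    rcases b.even_or_odd' with ⟨m, rfl | rfl⟩
    · exact h.sub_ne_two_smul hil.symm (m • (z j - z i)) (by
        linear_combination (norm := module) hz)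
    · exact h.sub_ne_two_smul hjl.symm (m • (z j - z i)) (by
        linear_combination (norm := module) hz)
  · have heq : c • (z k - z i) = (-b) • (z j - z i) + (1 : ℤ) • (z l - z i) := by
      linear_combination (norm := module) -hz
    exact isUnit_of_dvd_one (h.dvd_of_smul_eq hij hil hjl hc heq).2

end Module

section Plane

variable {κ : Type*} {L : κ → Module.Dual ℤ (Fin 2 → ℤ)} {r : κ → ℤ} {z : κ → Fin 2 → ℤ}

theorem odd_rot_dotProduct (h : IsTight (fun j => L j) r z) {i j k : κ} (hij : i ≠ j)
    (hik : i ≠ k) (hjk : j ≠ k) : Odd (rot (z j - z i) ⬝ᵥ (z k - z i)) := by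
  have not_even : ∀ {p q}, p ≠ q → ¬ (Even (z p 0 - z q 0) ∧ Even (z p 1 - z q 1)) := by
    rintro p q hpq ⟨⟨a, ha⟩, ⟨b, hb⟩⟩
    refine h.sub_ne_two_smul hpq ![a, b] (funext (Fin.forall_fin_two.2 ⟨?_, ?_⟩)) <;>
      simp <;> lia
  have hij := not_even hij
  have hik := not_even hik
  have hjk := not_even hjk
  simp only [rot_dotProduct, Pi.sub_apply]
  grind [Int.even_sub]

theorem exists_eq_smul_sub_add_smul_sub (h : IsTight (fun j => L j) r z) {i j k : κ}
    (hij : i ≠ j) (hik : i ≠ k) (hjk : j ≠ k) (y : Fin 2 → ℤ) :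
    ∃ a b : ℤ, y = a • (z j - z i) + b • (z k - z i) := by
  have hD : rot (z j - z i) ⬝ᵥ (z k - z i) ≠ 0 := fun h0 => by
    simpa [h0] using h.odd_rot_dotProduct hij hik hjk
  have cramer := rot_dotProduct_smul (z j - z i) (z k - z i) y
  obtain ⟨⟨a, ha⟩, ⟨b, hb⟩⟩ := h.dvd_of_smul_eq hij hik hjk hD cramer
  refine ⟨a, b, smul_right_injective _ hD ?_⟩
  simp only [cramer, ha, hb, smul_add, smul_smul]

theorem add_eq_add_or (h : IsTight (fun j => L j) r z) {i j k l : κ}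
    (hij : i ≠ j) (hik : i ≠ k) (hil : i ≠ l) (hjk : j ≠ k) (hjl : j ≠ l) (hkl : k ≠ l) :
    z l + z i = z j + z k ∨ z l + z j = z i + z k ∨ z l + z k = z i + z j := by
  obtain ⟨b, c, hbc⟩ := h.exists_eq_smul_sub_add_smul_sub hij hik hjk (z l - z i)
  have ha := h.isUnit_of_eq_add_add hjk hjl hkl (a := b) (b := c) (c := 1 - b - c) (k := i)
    (by ring) (by linear_combination (norm := module) hbc)
  have hb := h.isUnit_of_eq_add_add hik hil hkl (a := 1 - b - c) (b := c) (c := b) (k := j)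
    (by ring) (by linear_combination (norm := module) hbc)
  have hc := h.isUnit_of_eq_add_add hij hil hjl (a := 1 - b - c) (b := b) (c := c) (k := k)
    (by ring) (by linear_combination (norm := module) hbc)
  rw [Int.isUnit_iff] at ha hb hc
  obtain ⟨rfl, rfl⟩ | ⟨rfl, rfl⟩ | ⟨rfl, rfl⟩ :
      (b = 1 ∧ c = 1) ∨ (b = -1 ∧ c = 1) ∨ (b = 1 ∧ c = -1) := by lia
  · exact .inl (by linear_combination (norm := module) hbc)
  · exact .inr (.inl (by linear_combination (norm := module) hbc))
  · exact .inr (.inr (by linear_combination (norm := module) hbc))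

theorem mul_lt_mul_of_chord (h : IsTight (fun j => L j) r z) {i j k l : κ}
    (hij : i ≠ j) (hik : i ≠ k) (hjk : j ≠ k) (hil : i ≠ l) (hjl : j ≠ l)
    (hpar : z i + z j = z k + z l) {e v : Fin 2 → ℤ} (hv : v ≠ 0) (hkv : L k v = 0)
    (hke : L k e ≤ r k) (hi : L i e ≤ r i ∧ L i (e + v) ≤ r i)
    (hj : L j e ≤ r j ∧ L j (e + v) ≤ r j) :
    L i (z i - z k) * L j (z j - z k) < L i (z j - z k) * L j (z i - z k) := by
  have hspan := h.exists_eq_smul_sub_add_smul_sub hik.symm hjk.symm hij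
  have hjsub : z j - z k = z l - z i := by linear_combination (norm := module) hpar
  have hisub : z i - z k = z l - z j := by linear_combination (norm := module) hpar
  have hi_self := h.apply_self i
  have hj_self := h.apply_self j
  have hk_self := h.apply_self k
  apply _root_.mul_lt_mul_of_chord (β := L k) (e := e - z k) (v := v) hspan <;>
    grind [h.apply_le hik, h.apply_le hik.symm, h.apply_le hil, h.apply_le hjk,
      h.apply_le hjk.symm, h.apply_le hjl]

theorem false_of_chords (h : IsTight (fun j => L j) r z) {i j k l : κ}
    (hij : i ≠ j) (hik : i ≠ k) (hil : i ≠ l) (hjk : j ≠ k) (hjl : j ≠ l)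
    (hpar : z i + z j = z k + z l)
    (hchord : ∀ m, m = k ∨ m = l → ∃ e v, v ≠ 0 ∧ L m v = 0 ∧ L m e ≤ r m ∧
      (L i e ≤ r i ∧ L i (e + v) ≤ r i) ∧ (L j e ≤ r j ∧ L j (e + v) ≤ r j)) : False := by
  obtain ⟨e, v, hv, hkv, hke, hi, hj⟩ := hchord k (.inl rfl)
  have hk := h.mul_lt_mul_of_chord hij hik hjk hil hjl hpar hv hkv hke hi hj
  obtain ⟨e, v, hv, hlv, hle, hi, hj⟩ := hchord l (.inr rfl)
  have hl := h.mul_lt_mul_of_chord hij hil hjl hik hjk (by rw [hpar, add_comm]) hv hlv hle hi hj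
  have hil' : z i - z l = -(z j - z k) := by linear_combination (norm := module) hpar
  have hjl' : z j - z l = -(z i - z k) := by linear_combination (norm := module) hpar
  rw [hil', hjl'] at hl
  simp only [map_neg, neg_mul_neg] at hl
  exact lt_asymm hk hl

theorem pos_of_apply_le (h : IsTight (fun j => L j) r z) {i j k l : κ} (hij : i ≠ j) (hik : i ≠ k)
    (hjl : j ≠ l) (hpar : z j - z i = z l - z k) {s t : ℤ}
    (hi : L i (z i + s • (z j - z i) + t • (z k - z i)) ≤ r i)
    (hj : L j (z i + s • (z j - z i) + t • (z k - z i)) ≤ r j) : 0 < t := by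
  have hkl : z k - z i = z l - z j := by linear_combination (norm := module) hpar
  have hi_self := h.apply_self i
  have hj_self := h.apply_self j
  have hjj := h.apply_le hij.symm
  have hii := h.apply_le hij
  have hk := h.apply_le hik
  have hl := h.apply_le hjl
  by_contra! ht
  rcases le_or_gt s 0 with hs | hs
  · simp only [map_add, map_smul, map_sub, smul_eq_mul] at hi
    nlinarith
  · rw [hkl] at hj
    simp only [map_add, map_smul, map_sub, smul_eq_mul] at hj
    nlinarith

theorem false_of_separated (h : IsTight (fun j => L j) r z) {i j k l : κ}
    (hij : i ≠ j) (hik : i ≠ k) (hjk : j ≠ k) (hil : i ≠ l) (hjl : j ≠ l) (hkl : k ≠ l)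
    (hpar : z j - z i = z l - z k)
    (hsep : ∀ w : Module.Dual ℤ (Fin 2 → ℤ), ∃ p q, (L i p ≤ r i ∧ L j p ≤ r j) ∧
      (L k q ≤ r k ∧ L l q ≤ r l) ∧ w p ≤ w q) : False := by
  obtain ⟨φ, hφd, hφ⟩ :
      ∃ φ : Module.Dual ℤ (Fin 2 → ℤ), φ (z j - z i) = 0 ∧ 0 < φ (z k - z i) := by
    have hD : rot (z j - z i) ⬝ᵥ (z k - z i) ≠ 0 := fun h0 => by
      simpa [h0] using h.odd_rot_dotProduct hij hik hjk
    refine ⟨(rot (z j - z i) ⬝ᵥ (z k - z i)) • dotProductEquiv ℤ (Fin 2) (rot (z j - z i)), ?_, ?_⟩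
    · rw [LinearMap.smul_apply, dotProductEquiv_apply_apply, rot_dotProduct_self, smul_zero]
    · rw [LinearMap.smul_apply, dotProductEquiv_apply_apply, smul_eq_mul]
      exact mul_self_pos.2 hD
  obtain ⟨p, q, ⟨hip, hjp⟩, ⟨hkq, hlq⟩, hpq⟩ := hsep φ
  obtain ⟨s, t, hst⟩ := h.exists_eq_smul_sub_add_smul_sub hij hik hjk (p - z i)
  obtain ⟨s', t', hst'⟩ := h.exists_eq_smul_sub_add_smul_sub hkl hik.symm hil.symm (q - z k)
  rw [sub_eq_iff_eq_add', ← add_assoc] at hst hst'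
  have ht : 0 < t := h.pos_of_apply_le hij hik hjl hpar (hst ▸ hip) (hst ▸ hjp)
  have ht' : 0 < t' := h.pos_of_apply_le hkl hik.symm hjl.symm hpar.symm (hst' ▸ hkq) (hst' ▸ hlq)
  have hdiff : p - q = (s - s') • (z j - z i) + (t + t' - 1) • (z k - z i) := by
    rw [hst, hst', ← hpar]
    module
  have : 0 < φ (p - q) := by
    rw [hdiff, map_add, map_smul, map_smul, hφd, smul_zero, zero_add, smul_eq_mul]
    exact mul_pos (by lia) hφ
  rw [map_sub] at this
  lia

theorem nontrivial_of_separated (h : IsTight (fun j => L j) r z) (S : Set κ)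
    (hsep : ∀ w : Module.Dual ℤ (Fin 2 → ℤ), ∃ p q, (∀ j ∉ S, L j p ≤ r j) ∧
      (∀ j ∈ S, L j q ≤ r j) ∧ w p ≤ w q) : S.Nontrivial := by
  rw [← Set.not_subsingleton_iff]
  intro hS
  rcases hS.eq_empty_or_singleton with rfl | ⟨i, rfl⟩
  · obtain ⟨p, -, hp, -⟩ := hsep 0
    obtain ⟨j, hj⟩ := h.infeasible p
    exact hj.not_ge (hp j (Set.notMem_empty j))
  · obtain ⟨p, q, hp, hq, hpq⟩ := hsep (L i)
    obtain ⟨j, hj⟩ := h.infeasible p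
    by_cases hji : j = i
    · exact hj.not_ge (hji ▸ hpq.trans (hq i rfl))
    · exact hj.not_ge (hp j hji)

theorem false_of_separated_of_chords (h : IsTight (fun j => L j) r z) (S : Set κ)
    (hsep : ∀ w : Module.Dual ℤ (Fin 2 → ℤ), ∃ p q, (∀ i ∈ S, L i p ≤ r i) ∧
      (∀ j ∉ S, L j q ≤ r j) ∧ w p ≤ w q)
    (hchord : ∀ j ∉ S, ∃ e v, v ≠ 0 ∧ L j v = 0 ∧ L j e ≤ r j ∧
      ∀ i ∈ S, L i e ≤ r i ∧ L i (e + v) ≤ r i) : False := by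
  obtain ⟨i, hi, j, hj, hij⟩ : S.Nontrivial := by
    refine h.nontrivial_of_separated S fun w => ?_
    obtain ⟨p, q, hp, hq, hpq⟩ := hsep (-w)
    exact ⟨q, p, hq, hp, by simpa using hpq⟩
  obtain ⟨k, hk, l, hl, hkl⟩ : Sᶜ.Nontrivial := by
    refine h.nontrivial_of_separated Sᶜ fun w => ?_
    simpa using hsep w
  have hik : i ≠ k := fun hik => hk (hik ▸ hi)
  have hil : i ≠ l := fun hil => hl (hil ▸ hi)
  have hjk : j ≠ k := fun hjk => hk (hjk ▸ hj)
  have hjl : j ≠ l := fun hjl => hl (hjl ▸ hj)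
  rcases h.add_eq_add_or hij hik hil hjk hjl hkl with hpar | hpar | hpar
  · refine h.false_of_separated hij hik hjk hil hjl hkl
      (by linear_combination (norm := module) -hpar) fun w => ?_
    obtain ⟨p, q, hp, hq, hpq⟩ := hsep w
    exact ⟨p, q, ⟨hp i hi, hp j hj⟩, ⟨hq k hk, hq l hl⟩, hpq⟩
  · refine h.false_of_separated hij hil hjl hik hjk hkl.symm
      (by linear_combination (norm := module) hpar) fun w => ?_
    obtain ⟨p, q, hp, hq, hpq⟩ := hsep w
    exact ⟨p, q, ⟨hp i hi, hp j hj⟩, ⟨hq l hl, hq k hk⟩, hpq⟩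
  · refine h.false_of_chords hij hik hil hjk hjl (by rw [← hpar, add_comm]) ?_
    rintro m (rfl | rfl)
    · obtain ⟨e, v, hv, hmv, hme, hS⟩ := hchord m hk
      exact ⟨e, v, hv, hmv, hme, hS i hi, hS j hj⟩
    · obtain ⟨e, v, hv, hmv, hme, hS⟩ := hchord m hl
      exact ⟨e, v, hv, hmv, hme, hS i hi, hS j hj⟩

end Plane

end IsTight

theorem exists_forall_apply_le {κ : Type*} [Finite κ] {L : κ → Module.Dual ℤ (Fin 2 → ℤ)}
    {r : κ → ℤ} (S : Set κ)
    (hsep : ∀ w : Module.Dual ℤ (Fin 2 → ℤ), ∃ p q, (∀ i ∈ S, L i p ≤ r i) ∧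
      (∀ j ∉ S, L j q ≤ r j) ∧ w p ≤ w q)
    (hchord : ∀ j ∉ S, ∃ e v, v ≠ 0 ∧ L j v = 0 ∧ L j e ≤ r j ∧
      ∀ i ∈ S, L i e ≤ r i ∧ L i (e + v) ≤ r i) : ∃ x, ∀ j, L j x ≤ r j := by
  by_contra! hne
  obtain ⟨T, r', z, hle, htight⟩ := exists_isTight (L := fun j => L j) hne
  refine htight.false_of_separated_of_chords (L := fun j : T => L j) ((↑) ⁻¹' S) (fun w => ?_)
    fun j hj => ?_
  · obtain ⟨p, q, hp, hq, hpq⟩ := hsep w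
    exact ⟨p, q, fun i hi => (hp i hi).trans (hle i), fun j hj => (hq j hj).trans (hle j), hpq⟩
  · obtain ⟨e, v, hv, hjv, hje, hS⟩ := hchord j hj
    exact ⟨e, v, hv, hjv, hje.trans (hle j), fun i hi =>
      ⟨(hS i hi).1.trans (hle i), (hS i hi).2.trans (hle i)⟩⟩

section NormalCone

variable {P V : Set (Fin 2 → ℝ)} {u v w : Fin 2 → ℝ}

theorem mem_normalCone : w ∈ normalCone P u ↔ ∀ x ∈ P, x ⬝ᵥ w ≤ u ⬝ᵥ w := Iff.rfl

theorem convex_setOf_dotProduct_le (w : Fin 2 → ℝ) (c : ℝ) : Convex ℝ {x | x ⬝ᵥ w ≤ c} :=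
  convex_halfSpace_le ⟨fun x y => add_dotProduct x y w, fun a x => smul_dotProduct a x w⟩ c

theorem normalCone_convexHull : normalCone (convexHull ℝ V) u = normalCone V u := by
  ext w
  exact ⟨fun h x hx => h x (subset_convexHull ℝ V hx),
    fun h => convexHull_min h (convex_setOf_dotProduct_le w _)⟩

theorem smul_mem_normalCone {c : ℝ} (hc : 0 ≤ c) (hw : w ∈ normalCone P u) :
    c • w ∈ normalCone P u := mem_normalCone.2 fun x hx => by
  simpa only [dotProduct_smul] using smul_le_smul_of_nonneg_left (mem_normalCone.1 hw x hx) hc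

theorem mem_normalCone_of_dotProduct_eq (h : u ⬝ᵥ w = v ⬝ᵥ w) (hw : w ∈ normalCone P u) :
    w ∈ normalCone P v := fun x hx => (hw x hx).trans_eq h

theorem exists_mem_normalCone (hV : V.Finite) (hne : V.Nonempty) (w : Fin 2 → ℝ) :
    ∃ u ∈ V, w ∈ normalCone V u :=
  Set.exists_max_image V (· ⬝ᵥ w) hV hne

theorem eq_zero_of_mem_normalCone_of_mem_interior (hu : u ∈ interior P)
    (hw : w ∈ normalCone P u) : w = 0 := by
  have hnear : ∀ᶠ t in nhds (0 : ℝ), u + t • w ∈ P := by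
    have hcont : Continuous fun t : ℝ => u + t • w := by fun_prop
    exact hcont.continuousAt.preimage_mem_nhds (by simpa using mem_interior_iff_mem_nhds.1 hu)
  obtain ⟨t, htP, ht⟩ :=
    ((hnear.filter_mono nhdsWithin_le_nhds).and (self_mem_nhdsWithin (s := Set.Ioi 0))).exists
  have hle := mem_normalCone.1 hw _ htP
  rw [add_dotProduct, smul_dotProduct, add_le_iff_nonpos_right, smul_eq_mul] at hle
  exact by_contra fun hw0 => hle.not_gt (mul_pos ht (Matrix.dotProduct_star_self_pos_iff.2 hw0))

theorem eq_zero_of_mem_normalCone_of_neg_mem (hP : (interior P).Nonempty)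
    (hw : w ∈ normalCone P u) (hw' : -w ∈ normalCone P u) : w = 0 := by
  obtain ⟨p, hp⟩ := hP
  have hle := mem_normalCone.1 hw' p (interior_subset hp)
  rw [dotProduct_neg, dotProduct_neg, neg_le_neg_iff] at hle
  exact eq_zero_of_mem_normalCone_of_mem_interior hp
    (mem_normalCone_of_dotProduct_eq (hle.antisymm (hw p (interior_subset hp))) hw)

end NormalCone

/-- Ordered pairs of distinct points of `V` on a common supporting line, with `V` to the left when
going from `e.1` to `e.2`, so that `rot (e.1 - e.2)` is an outer normal. The pairs need not consist
of vertices: every pair of points of `V` on an edge of the hull is included. -/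
def orientedEdges (V : Set (Fin 2 → ℝ)) : Set ((Fin 2 → ℝ) × (Fin 2 → ℝ)) :=
  {e ∈ V.offDiag | rot (e.1 - e.2) ∈ normalCone V e.1}

section Edges

variable {V : Set (Fin 2 → ℝ)} {u v w : Fin 2 → ℝ}

theorem finite_orientedEdges (hV : V.Finite) : (orientedEdges V).Finite :=
  hV.offDiag.subset (Set.sep_subset _ _)

theorem mk_mem_orientedEdges (hu : u ∈ V) (hv : v ∈ V) (huv : u ≠ v)
    (h : rot (u - v) ∈ normalCone V u) : (u, v) ∈ orientedEdges V :=
  ⟨⟨hu, hv, huv⟩, h⟩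

theorem dotProduct_rot_sub (u v : Fin 2 → ℝ) : u ⬝ᵥ rot (u - v) = v ⬝ᵥ rot (u - v) := by
  rw [← sub_eq_zero, ← sub_dotProduct, dotProduct_comm, rot_dotProduct_self]

theorem swap_mk_mem_orientedEdges (hu : u ∈ V) (hv : v ∈ V) (huv : u ≠ v)
    (h : rot (v - u) ∈ normalCone V u) : (v, u) ∈ orientedEdges V :=
  mk_mem_orientedEdges hv hu huv.symm
    (mem_normalCone_of_dotProduct_eq (dotProduct_rot_sub v u).symm h)

theorem exists_orientedEdge_eq_smul (hu : u ∈ V) (hv : v ∈ V) (huv : u ≠ v)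
    (hw : w ∈ normalCone V u) (hw0 : w ≠ 0) (heq : u ⬝ᵥ w = v ⬝ᵥ w) :
    ∃ e ∈ orientedEdges V, ∃ s : ℝ, 0 ≤ s ∧
      rot (e.1 - e.2) ∈ normalCone V u ∧ w = s • rot (e.1 - e.2) := by
  set d := v - u with hd
  have hdd : 0 < d ⬝ᵥ d := Matrix.dotProduct_star_self_pos_iff.2 (sub_ne_zero.2 huv.symm)
  have hwd : w ⬝ᵥ d = 0 := by rw [dotProduct_comm, sub_dotProduct, heq, sub_self]
  have hsmul : (d ⬝ᵥ d) • w = (rot d ⬝ᵥ w) • rot d := by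
    simpa only [rot_dotProduct_rot, hwd, zero_smul, zero_add] using rot_dotProduct_smul d (rot d) w
  have hc : rot d ⬝ᵥ w ≠ 0 := fun hc =>
    hw0 ((smul_eq_zero.1 (hsmul.trans (by rw [hc, zero_smul]))).resolve_left hdd.ne')
  have hrot : rot d = (d ⬝ᵥ d / (rot d ⬝ᵥ w)) • w := by
    rw [div_eq_inv_mul, mul_smul, hsmul, inv_smul_smul₀ hc]
  have hw_eq : w = (rot d ⬝ᵥ w / d ⬝ᵥ d) • rot d := by
    rw [div_eq_inv_mul, mul_smul, ← hsmul, inv_smul_smul₀ hdd.ne']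
  rcases hc.lt_or_gt with hneg | hpos
  · have hmem : rot (u - v) ∈ normalCone V u := by
      rw [← neg_sub, rot_neg, ← hd, hrot, ← neg_smul]
      exact smul_mem_normalCone (neg_nonneg.2 (div_nonpos_of_nonneg_of_nonpos hdd.le hneg.le)) hw
    refine ⟨(u, v), mk_mem_orientedEdges hu hv huv hmem, -(rot d ⬝ᵥ w / d ⬝ᵥ d),
      neg_nonneg.2 (div_nonpos_of_nonpos_of_nonneg hneg.le hdd.le), hmem, ?_⟩
    rwa [← neg_sub v u, rot_neg, ← hd, neg_smul_neg]
  · have hmem : rot d ∈ normalCone V u := by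
      rw [hrot]
      exact smul_mem_normalCone (div_pos hdd hpos).le hw
    exact ⟨(v, u), swap_mk_mem_orientedEdges hu hv huv hmem, rot d ⬝ᵥ w / d ⬝ᵥ d,
      (div_pos hpos hdd).le, hmem, hw_eq⟩

theorem exists_smul_rot_mem_normalCone (hV : V.Finite) (hne : (V \ {u}).Nonempty)
    (hw : ∀ x ∈ V, x ≠ u → x ⬝ᵥ w < u ⬝ᵥ w) (c : ℝ) :
    ∃ v ∈ V, u ≠ v ∧ c • rot (u - v) ∈ normalCone V u := by
  -- Seen from `u`, the next vertex has extremal slope in the frame of `w` and `rot w`.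
  obtain ⟨v, ⟨hv, hvu⟩, hmax⟩ := Set.exists_max_image (V \ {u})
    (fun x => c * (rot w ⬝ᵥ (x - u)) / (u - x) ⬝ᵥ w) hV.sdiff hne
  refine ⟨v, hv, Ne.symm hvu, mem_normalCone.2 fun x hx => ?_⟩
  rcases eq_or_ne x u with rfl | hxu
  · rfl
  have hpos : ∀ y ∈ V, y ≠ u → 0 < (u - y) ⬝ᵥ w := fun y hy hyu => by
    simpa [sub_dotProduct] using hw y hy hyu
  have hslope := hmax x ⟨hx, hxu⟩
  rw [div_le_div_iff₀ (hpos x hx hxu) (hpos v hv hvu)] at hslope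
  have hww : 0 < w ⬝ᵥ w := by
    refine Matrix.dotProduct_star_self_pos_iff.2 ?_
    rintro rfl
    simpa using hw v hv hvu
  have hident : (w ⬝ᵥ w) * (u ⬝ᵥ c • rot (u - v) - x ⬝ᵥ c • rot (u - v)) =
      c * (rot w ⬝ᵥ (v - u)) * ((u - x) ⬝ᵥ w) - c * (rot w ⬝ᵥ (x - u)) * ((u - v) ⬝ᵥ w) := by
    simp only [rot, Matrix.vec2_dotProduct, Pi.sub_apply, Pi.smul_apply, smul_eq_mul,
      Matrix.cons_val_zero, Matrix.cons_val_one]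
    ring
  exact sub_nonneg.1 (nonneg_of_mul_nonneg_right (hident ▸ sub_nonneg.2 hslope) hww)

theorem exists_orientedEdges_eq_smul_add_smul_of_lt (hV : V.Finite)
    (hint : (interior (convexHull ℝ V)).Nonempty) (hu : u ∈ V) (hw0 : w ≠ 0)
    (hw : ∀ x ∈ V, x ≠ u → x ⬝ᵥ w < u ⬝ᵥ w) :
    ∃ e ∈ orientedEdges V, ∃ e' ∈ orientedEdges V, ∃ s t : ℝ, 0 ≤ s ∧ 0 ≤ t ∧
      rot (e.1 - e.2) ∈ normalCone V u ∧ rot (e'.1 - e'.2) ∈ normalCone V u ∧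
      w = s • rot (e.1 - e.2) + t • rot (e'.1 - e'.2) := by
  have hpointed {y : Fin 2 → ℝ} (hy : y ∈ normalCone V u) (hy' : -y ∈ normalCone V u) : y = 0 :=
    eq_zero_of_mem_normalCone_of_neg_mem hint (normalCone_convexHull.symm.subset hy)
      (normalCone_convexHull.symm.subset hy')
  have hne : (V \ {u}).Nonempty := by
    by_contra hempty
    have hVu : ∀ x ∈ V, x = u := fun x hx => by_contra fun hxu => hempty ⟨x, hx, hxu⟩
    exact hw0 (hpointed (fun x hx => by rw [hVu x hx]) fun x hx => by rw [hVu x hx])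
  obtain ⟨v₁, hv₁, huv₁, hmem₁⟩ := exists_smul_rot_mem_normalCone hV hne hw 1
  obtain ⟨v₂, hv₂, huv₂, hmem₂⟩ := exists_smul_rot_mem_normalCone hV hne hw (-1)
  rw [one_smul] at hmem₁
  rw [neg_one_smul, ← rot_neg, neg_sub] at hmem₂
  have hδ : 0 ≤ rot (u - v₁) ⬝ᵥ (u - v₂) := by
    rw [dotProduct_comm, sub_dotProduct, sub_nonneg]
    exact mem_normalCone.1 hmem₁ v₂ hv₂
  have hpos₁ : 0 < (u - v₁) ⬝ᵥ w := by simpa [sub_dotProduct] using hw v₁ hv₁ huv₁.symm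
  have hpos₂ : 0 < (u - v₂) ⬝ᵥ w := by simpa [sub_dotProduct] using hw v₂ hv₂ huv₂.symm
  have hsmul : (rot (u - v₁) ⬝ᵥ (u - v₂)) • w =
      ((u - v₂) ⬝ᵥ w) • rot (u - v₁) + ((u - v₁) ⬝ᵥ w) • rot (v₂ - u) := by
    rw [rot_dotProduct_smul_eq_sub, sub_eq_add_neg, ← smul_neg, ← rot_neg, neg_sub]
  have hδ0 : rot (u - v₁) ⬝ᵥ (u - v₂) ≠ 0 := fun h0 => by
    rw [h0, zero_smul, eq_comm, ← eq_neg_iff_add_eq_zero, ← smul_neg] at hsmul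
    have hneg : -rot (v₂ - u) ∈ normalCone V u := by
      rw [← inv_smul_smul₀ hpos₁.ne' (-rot (v₂ - u)), ← hsmul]
      exact smul_mem_normalCone (inv_nonneg.2 hpos₁.le) (smul_mem_normalCone hpos₂.le hmem₁)
    exact huv₂ (sub_eq_zero.1 (rot_eq_zero.1 (hpointed hmem₂ hneg))).symm
  refine ⟨(u, v₁), mk_mem_orientedEdges hu hv₁ huv₁ hmem₁, (v₂, u),
    swap_mk_mem_orientedEdges hu hv₂ huv₂ hmem₂, _, _, div_nonneg hpos₂.le hδ,
    div_nonneg hpos₁.le hδ, hmem₁, hmem₂, ?_⟩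
  rw [div_eq_inv_mul, div_eq_inv_mul, mul_smul, mul_smul, ← smul_add, ← hsmul,
    inv_smul_smul₀ hδ0]

theorem exists_orientedEdges_eq_smul_add_smul (hV : V.Finite)
    (hint : (interior (convexHull ℝ V)).Nonempty) (hu : u ∈ V) (hw : w ∈ normalCone V u)
    (hw0 : w ≠ 0) : ∃ e ∈ orientedEdges V, ∃ e' ∈ orientedEdges V, ∃ s t : ℝ, 0 ≤ s ∧ 0 ≤ t ∧
      rot (e.1 - e.2) ∈ normalCone V u ∧ rot (e'.1 - e'.2) ∈ normalCone V u ∧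
      w = s • rot (e.1 - e.2) + t • rot (e'.1 - e'.2) := by
  by_cases! hlt : ∀ x ∈ V, x ≠ u → x ⬝ᵥ w < u ⬝ᵥ w
  · exact exists_orientedEdges_eq_smul_add_smul_of_lt hV hint hu hw0 hlt
  · obtain ⟨x, hx, hxu, hle⟩ := hlt
    obtain ⟨e, he, s, hs, hmem, hes⟩ :=
      exists_orientedEdge_eq_smul hu hx hxu.symm hw hw0 (hle.antisymm (hw x hx))
    exact ⟨e, he, e, he, s, 0, hs, le_rfl, hmem, hmem, by rwa [zero_smul, add_zero]⟩

end Edges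

theorem FanRefines.refl (P : Set (Fin 2 → ℝ)) : FanRefines P P := fun u hu => ⟨u, hu, subset_rfl⟩

theorem FanRefines.mem_of_forall_orientedEdges {V G : Set (Fin 2 → ℝ)}
    (href : FanRefines (convexHull ℝ V) G) (hV : V.Finite)
    (hint : (interior (convexHull ℝ V)).Nonempty) (hG : Convex ℝ G) (hGc : IsClosed G)
    {y : Fin 2 → ℝ} (hy : ∀ e ∈ orientedEdges V,
      ∃ g ∈ G, y ⬝ᵥ rot (e.1 - e.2) ≤ g ⬝ᵥ rot (e.1 - e.2)) : y ∈ G := by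
  by_contra hyG
  obtain ⟨f, c, hfG, hfy⟩ := geometric_hahn_banach_closed_point hG hGc hyG
  obtain ⟨w, hw⟩ : ∃ w : Fin 2 → ℝ, ∀ x, f x = x ⬝ᵥ w :=
    ⟨(dotProductEquiv ℝ (Fin 2)).symm f.toLinearMap, fun x => by
      rw [dotProduct_comm, ← dotProductEquiv_apply_apply, LinearEquiv.apply_symm_apply]; rfl⟩
  obtain ⟨u, hu, huw⟩ := exists_mem_normalCone hV (convexHull_nonempty_iff.1
    (hint.mono interior_subset)) w
  obtain ⟨v, hv, hsub⟩ := href u (subset_convexHull ℝ V hu)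
  rw [normalCone_convexHull] at hsub
  have hlt : v ⬝ᵥ w < y ⬝ᵥ w := by simpa only [hw] using (hfG v hv).trans hfy
  have hw0 : w ≠ 0 := by
    rintro rfl
    simp at hlt
  obtain ⟨e, he, e', he', s, t, hs, ht, hmem, hmem', rfl⟩ :=
    exists_orientedEdges_eq_smul_add_smul hV hint hu huw hw0
  have hle : ∀ d ∈ orientedEdges V, rot (d.1 - d.2) ∈ normalCone V u →
      y ⬝ᵥ rot (d.1 - d.2) ≤ v ⬝ᵥ rot (d.1 - d.2) := fun d hd hdu => by
    obtain ⟨g, hg, hyg⟩ := hy d hd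
    exact hyg.trans (hsub hdu g hg)
  simp only [dotProduct_add, dotProduct_smul] at hlt
  exact hlt.not_ge (add_le_add (smul_le_smul_of_nonneg_left (hle e he hmem) hs)
    (smul_le_smul_of_nonneg_left (hle e' he' hmem') ht))

section LatticePoints

variable {d : ℕ} {x y : Fin d → ℝ}

theorem isLatticePt_iff_exists_comp : IsLatticePt x ↔ ∃ z : Fin d → ℤ, Int.cast ∘ z = x := by
  simp only [IsLatticePt, Classical.skolem, funext_iff, Function.comp_apply, eq_comm]

theorem isLatticePt_comp (z : Fin d → ℤ) : IsLatticePt (Int.cast ∘ z) := fun i => ⟨z i, rfl⟩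

theorem IsLatticePt.neg (hx : IsLatticePt x) : IsLatticePt (-x) := by
  obtain ⟨x, rfl⟩ := isLatticePt_iff_exists_comp.1 hx
  exact fun i => ⟨-x i, by simp⟩

theorem IsLatticePt.add (hx : IsLatticePt x) (hy : IsLatticePt y) : IsLatticePt (x + y) := by
  obtain ⟨x, rfl⟩ := isLatticePt_iff_exists_comp.1 hx
  obtain ⟨y, rfl⟩ := isLatticePt_iff_exists_comp.1 hy
  exact fun i => ⟨x i + y i, by simp⟩

theorem IsLatticePt.sub (hx : IsLatticePt x) (hy : IsLatticePt y) : IsLatticePt (x - y) :=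
  sub_eq_add_neg x y ▸ hx.add hy.neg

theorem IsLatticePt.natCast_smul (hx : IsLatticePt x) (n : ℕ) : IsLatticePt ((n : ℝ) • x) := by
  obtain ⟨x, rfl⟩ := isLatticePt_iff_exists_comp.1 hx
  exact fun i => ⟨n * x i, by simp⟩

theorem IsLatticePt.rot {x : Fin 2 → ℝ} (hx : IsLatticePt x) : IsLatticePt (rot x) := by
  obtain ⟨x, rfl⟩ := isLatticePt_iff_exists_comp.1 hx
  exact Fin.forall_fin_two.2 ⟨⟨-x 1, by simp [_root_.rot]⟩, ⟨x 0, rfl⟩⟩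

theorem intCast_dotProduct_intCast (x y : Fin d → ℤ) :
    (Int.cast ∘ x) ⬝ᵥ (Int.cast ∘ y) = ((y ⬝ᵥ x : ℤ) : ℝ) :=
  (dotProduct_comm _ _).trans (RingHom.map_dotProduct (Int.castRingHom ℝ) y x).symm

theorem intCast_dotProduct_intCast_le {x y : Fin d → ℤ} {c : ℝ} :
    (Int.cast ∘ x) ⬝ᵥ (Int.cast ∘ y) ≤ c ↔ y ⬝ᵥ x ≤ ⌊c⌋ := by
  rw [Int.le_floor, intCast_dotProduct_intCast]

end LatticePoints

theorem exists_isLatticePt_forall_dotProduct_le {ι κ : Type*} [Finite ι] [Finite κ]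
    {a : ι → Fin 2 → ℝ} {b : κ → Fin 2 → ℝ} (ha : ∀ i, IsLatticePt (a i))
    (hb : ∀ j, IsLatticePt (b j)) (r : ι → ℝ) (s : κ → ℝ)
    (hsep : ∀ w, ∃ p q, IsLatticePt p ∧ IsLatticePt q ∧
      (∀ i, p ⬝ᵥ a i ≤ r i) ∧ (∀ j, q ⬝ᵥ b j ≤ s j) ∧ p ⬝ᵥ w ≤ q ⬝ᵥ w)
    (hchord : ∀ j, ∃ u v, IsLatticePt u ∧ IsLatticePt v ∧ u ≠ v ∧ u ⬝ᵥ b j = v ⬝ᵥ b j ∧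
      u ⬝ᵥ b j ≤ s j ∧ ∀ i, u ⬝ᵥ a i ≤ r i ∧ v ⬝ᵥ a i ≤ r i) :
    ∃ x, IsLatticePt x ∧ (∀ i, x ⬝ᵥ a i ≤ r i) ∧ ∀ j, x ⬝ᵥ b j ≤ s j := by
  choose a' ha' using fun i => isLatticePt_iff_exists_comp.1 (ha i)
  choose b' hb' using fun j => isLatticePt_iff_exists_comp.1 (hb j)
  obtain rfl : (fun i => Int.cast ∘ a' i) = a := funext ha'
  obtain rfl : (fun j => Int.cast ∘ b' j) = b := funext hb'
  have hex : ∃ x : Fin 2 → ℤ, ∀ k : ι ⊕ κ, dotProductEquiv ℤ (Fin 2) (k.elim a' b') x ≤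
      k.elim (⌊r ·⌋) (⌊s ·⌋) := by
    refine exists_forall_apply_le (Set.range Sum.inl) (fun w => ?_) fun k hk => ?_
    · obtain ⟨n, rfl⟩ := (dotProductEquiv ℤ (Fin 2)).surjective w
      obtain ⟨p, q, hp, hq, hpr, hqs, hpq⟩ := hsep (Int.cast ∘ n)
      obtain ⟨p, rfl⟩ := isLatticePt_iff_exists_comp.1 hp
      obtain ⟨q, rfl⟩ := isLatticePt_iff_exists_comp.1 hq
      refine ⟨p, q, Set.forall_mem_range.2 fun i => intCast_dotProduct_intCast_le.1 (hpr i),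
        ?_, ?_⟩
      · rintro (i | j) hk
        · exact absurd ⟨i, rfl⟩ hk
        · exact intCast_dotProduct_intCast_le.1 (hqs j)
      · rwa [intCast_dotProduct_intCast, intCast_dotProduct_intCast, Int.cast_le] at hpq
    · obtain ⟨i⟩ | ⟨j⟩ := k
      · exact absurd ⟨i, rfl⟩ hk
      obtain ⟨u, v, hu, hv, huv, huvb, hus, huvr⟩ := hchord j
      obtain ⟨u, rfl⟩ := isLatticePt_iff_exists_comp.1 hu
      obtain ⟨v, rfl⟩ := isLatticePt_iff_exists_comp.1 hv
      refine ⟨u, v - u, sub_ne_zero.2 fun h => huv (h ▸ rfl), ?_,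
        intCast_dotProduct_intCast_le.1 hus,
        Set.forall_mem_range.2 fun i => ⟨intCast_dotProduct_intCast_le.1 (huvr i).1, ?_⟩⟩
      · rw [intCast_dotProduct_intCast, intCast_dotProduct_intCast, Int.cast_inj] at huvb
        exact (dotProduct_sub _ _ _).trans (sub_eq_zero.2 huvb.symm)
      · rw [add_sub_cancel]
        exact intCast_dotProduct_intCast_le.1 (huvr i).2
  obtain ⟨x, hx⟩ := hex
  exact ⟨Int.cast ∘ x, isLatticePt_comp x, fun i => intCast_dotProduct_intCast_le.2 (hx (.inl i)),
    fun j => intCast_dotProduct_intCast_le.2 (hx (.inr j))⟩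

theorem dotProduct_le_add_of_mem_add {V W : Set (Fin 2 → ℝ)} {m u v w : Fin 2 → ℝ}
    (hm : m ∈ convexHull ℝ V + convexHull ℝ W) (hu : w ∈ normalCone V u)
    (hv : w ∈ normalCone W v) : m ⬝ᵥ w ≤ u ⬝ᵥ w + v ⬝ᵥ w := by
  obtain ⟨f, hf, g, hg, rfl⟩ := hm
  rw [← normalCone_convexHull] at hu hv
  rw [add_dotProduct]
  exact add_le_add (hu f hf) (hv g hg)

theorem exists_isLatticePt_forall_orientedEdges {V W : Set (Fin 2 → ℝ)} {m : Fin 2 → ℝ}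
    (hV : V.Finite) (hW : W.Finite) (hVlat : ∀ v ∈ V, IsLatticePt v)
    (hWlat : ∀ v ∈ W, IsLatticePt v) (hm : IsLatticePt m)
    (hmVW : m ∈ convexHull ℝ V + convexHull ℝ W) :
    ∃ x, IsLatticePt x ∧ ∀ e ∈ orientedEdges V, x ⬝ᵥ rot (e.1 - e.2) ≤ e.1 ⬝ᵥ rot (e.1 - e.2) ∧
      ∃ g ∈ W, (m - x) ⬝ᵥ rot (e.1 - e.2) ≤ g ⬝ᵥ rot (e.1 - e.2) := by
  obtain ⟨f, hf, g, hg, -⟩ := id hmVW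
  have hVne : V.Nonempty := convexHull_nonempty_iff.1 ⟨f, hf⟩
  have hWne : W.Nonempty := convexHull_nonempty_iff.1 ⟨g, hg⟩
  choose γ hγW hγ using fun e : orientedEdges V =>
    exists_mem_normalCone hW hWne (rot (e.1.1 - e.1.2))
  have : Finite (orientedEdges V) := finite_orientedEdges hV
  have hlat (e : orientedEdges V) : IsLatticePt (rot (e.1.1 - e.1.2)) :=
    ((hVlat _ e.2.1.1).sub (hVlat _ e.2.1.2.1)).rot
  obtain ⟨x, hx, hxV, hxW⟩ := exists_isLatticePt_forall_dotProduct_le hlat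
    (fun e => (hlat e).neg) (fun e => e.1.1 ⬝ᵥ rot (e.1.1 - e.1.2))
    (fun e => (m - γ e) ⬝ᵥ -rot (e.1.1 - e.1.2))
    (fun w => by
      obtain ⟨p, hp, hpw⟩ := exists_mem_normalCone hV hVne (-w)
      obtain ⟨q, hq, hqw⟩ := exists_mem_normalCone hW hWne (-w)
      refine ⟨p, m - q, hVlat p hp, hm.sub (hWlat q hq), fun e => e.2.2 p hp, fun e => ?_, ?_⟩
      · have := mem_normalCone.1 (hγ e) q hq
        simp only [dotProduct_neg, sub_dotProduct]
        linarith
      · have := dotProduct_le_add_of_mem_add hmVW hpw hqw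
        simp only [dotProduct_neg, sub_dotProduct] at this ⊢
        linarith)
    fun e => by
      refine ⟨e.1.1, e.1.2, hVlat _ e.2.1.1, hVlat _ e.2.1.2.1, e.2.1.2.2, ?_, ?_,
        fun e' => ⟨e'.2.2 _ e.2.1.1, e'.2.2 _ e.2.1.2.1⟩⟩
      · rw [dotProduct_neg, dotProduct_neg, dotProduct_rot_sub]
      · have := dotProduct_le_add_of_mem_add hmVW e.2.2 (hγ e)
        simp only [dotProduct_neg, sub_dotProduct]
        linarith
  refine ⟨x, hx, fun e he => ⟨hxV ⟨e, he⟩, γ ⟨e, he⟩, hγW _, ?_⟩⟩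
  have := hxW ⟨e, he⟩
  simp only [dotProduct_neg, sub_dotProduct] at this ⊢
  linarith

theorem FanRefines.exists_isLatticePt_mem_sub_mem {F G : Set (Fin 2 → ℝ)} (href : FanRefines F G)
    (hF : IsLatticePolytope F) (hG : IsLatticePolytope G) (hint : (interior F).Nonempty)
    {m : Fin 2 → ℝ} (hm : IsLatticePt m) (hmFG : m ∈ F + G) :
    ∃ y ∈ G, IsLatticePt y ∧ m - y ∈ F := by
  obtain ⟨V, -, hVlat, rfl⟩ := hF
  obtain ⟨W, -, hWlat, rfl⟩ := hG
  obtain ⟨x, hx, hxe⟩ := exists_isLatticePt_forall_orientedEdges V.finite_toSet W.finite_toSet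
    hVlat hWlat hm hmFG
  refine ⟨m - x, href.mem_of_forall_orientedEdges V.finite_toSet hint (convex_convexHull ℝ _)
    (W.finite_toSet.isClosed_convexHull ℝ) fun e he => ?_, hm.sub hx, ?_⟩
  · obtain ⟨g, hg, hle⟩ := (hxe e he).2
    exact ⟨g, subset_convexHull ℝ _ hg, hle⟩
  · rw [sub_sub_cancel]
    exact (FanRefines.refl _).mem_of_forall_orientedEdges V.finite_toSet hint
      (convex_convexHull ℝ _) (V.finite_toSet.isClosed_convexHull ℝ)
      fun e he => ⟨e.1, subset_convexHull ℝ _ he.1.1, (hxe e he).1⟩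

theorem IsLatticePolytope.convex {d : ℕ} {P : Set (Fin d → ℝ)} (hP : IsLatticePolytope P) :
    Convex ℝ P := by
  obtain ⟨V, -, -, rfl⟩ := hP
  exact convex_convexHull ℝ _

theorem IsLatticePolytope.nonempty {d : ℕ} {P : Set (Fin d → ℝ)} (hP : IsLatticePolytope P) :
    P.Nonempty := by
  obtain ⟨V, hV, -, rfl⟩ := hP
  exact convexHull_nonempty_iff.2 hV

theorem IsLatticePolytope.add {d : ℕ} {P Q : Set (Fin d → ℝ)} (hP : IsLatticePolytope P)
    (hQ : IsLatticePolytope Q) : IsLatticePolytope (P + Q) := by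
  classical
  obtain ⟨V, hV, hVlat, rfl⟩ := hP
  obtain ⟨W, hW, hWlat, rfl⟩ := hQ
  refine ⟨V + W, hV.add hW, fun x hx => ?_, by rw [Finset.coe_add, convexHull_add]⟩
  obtain ⟨v, hv, w, hw, rfl⟩ := Finset.mem_add.1 hx
  exact (hVlat v hv).add (hWlat w hw)

theorem IsLatticePolytope.natCast_smul {d : ℕ} {P : Set (Fin d → ℝ)} (hP : IsLatticePolytope P)
    (n : ℕ) : IsLatticePolytope ((n : ℝ) • P) := by
  classical
  obtain ⟨V, hV, hVlat, rfl⟩ := hP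
  refine ⟨(n : ℝ) • V, hV.smul_finset, fun x hx => ?_,
    by rw [Finset.coe_smul_finset, convexHull_smul]⟩
  obtain ⟨v, hv, rfl⟩ := Finset.mem_smul_finset.1 hx
  exact (hVlat v hv).natCast_smul n

theorem FanRefines.add_left {F G : Set (Fin 2 → ℝ)} (h : FanRefines F G) (K : Set (Fin 2 → ℝ)) :
    FanRefines (F + K) G := by
  rintro _ ⟨f, hf, k, hk, rfl⟩
  obtain ⟨v, hv, hsub⟩ := h f hf
  refine ⟨v, hv, fun w hw => hsub fun x hx => ?_⟩
  have hle := mem_normalCone.1 hw (x + k) (Set.add_mem_add hx hk)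
  rwa [add_dotProduct, add_dotProduct, add_le_add_iff_right] at hle

theorem FanRefines.smul_left {F G : Set (Fin 2 → ℝ)} (h : FanRefines F G) {c : ℝ} (hc : 0 < c) :
    FanRefines (c • F) G := by
  rintro _ ⟨f, hf, rfl⟩
  obtain ⟨v, hv, hsub⟩ := h f hf
  refine ⟨v, hv, fun w hw => hsub fun x hx => ?_⟩
  have hle := mem_normalCone.1 hw (c • x) (Set.smul_mem_smul_set hx)
  rwa [smul_dotProduct, smul_dotProduct, smul_le_smul_iff_of_pos_left hc] at hle

theorem natCast_succ_smul_of_convex {E : Type*} [AddCommGroup E] [Module ℝ E] {P : Set E}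
    (hP : Convex ℝ P) (n : ℕ) : ((n + 1 : ℕ) : ℝ) • P = (n : ℝ) • P + P := by
  rw [Nat.cast_add_one, hP.add_smul n.cast_nonneg zero_le_one, one_smul]

theorem sum_smul_mem_smul_convexHull {E ι : Type*} [AddCommGroup E] [Module ℝ E] {V : Set E}
    {s : Finset ι} {c : ι → ℝ} {z : ι → E} {r : ℝ} (hc : ∀ i ∈ s, 0 ≤ c i)
    (hsum : ∑ i ∈ s, c i = r) (hr : 0 < r) (hz : ∀ i ∈ s, z i ∈ V) :
    ∑ i ∈ s, c i • z i ∈ r • convexHull ℝ V := by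
  subst hsum
  exact (Set.mem_smul_set_iff_inv_smul_mem₀ hr.ne' _ _).2 (s.centerMass_mem_convexHull hc hr hz)

theorem exists_sub_mem_smul_convexHull_of_finrank_le {E : Type*} [AddCommGroup E] [Module ℝ E]
    {V : Set E} [FiniteDimensional ℝ (vectorSpan ℝ V)] {n : ℕ} (hn : 1 ≤ n)
    (hdim : Module.finrank ℝ (vectorSpan ℝ V) ≤ n) {x : E}
    (hx : x ∈ ((n + 1 : ℕ) : ℝ) • convexHull ℝ V) :
    ∃ v ∈ V, x - v ∈ (n : ℝ) • convexHull ℝ V := by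
  classical
  obtain ⟨y, hy, rfl⟩ := hx
  obtain ⟨ι, _, z, w, hzV, hz, hw, hw1, rfl⟩ := eq_pos_convex_span_of_mem_convexHull hy
  have hne : (Finset.univ : Finset ι).Nonempty :=
    Finset.nonempty_of_sum_ne_zero (hw1.trans_ne one_ne_zero)
  have hcard : Fintype.card ι ≤ n + 1 := hz.card_le_finrank_succ.trans
    (Nat.succ_le_succ ((Submodule.finrank_mono (vectorSpan_mono ℝ hzV)).trans hdim))
  have hsum : ∑ j, ((n + 1 : ℕ) : ℝ) * w j = (n + 1 : ℕ) := by rw [← Finset.mul_sum, hw1, mul_one]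
  -- At most `n + 1` points share the total weight `n + 1`, so one of them has weight at least one.
  obtain ⟨i, -, hi⟩ : ∃ i ∈ Finset.univ, 1 ≤ ((n + 1 : ℕ) : ℝ) * w i := by
    refine Finset.exists_le_of_sum_le hne ?_
    rw [hsum, Finset.sum_const, nsmul_one]
    exact_mod_cast hcard
  refine ⟨z i, hzV ⟨i, rfl⟩, ?_⟩
  have hsub : ((n + 1 : ℕ) : ℝ) • ∑ j, w j • z j - z i =
      ∑ j, (((n + 1 : ℕ) : ℝ) * w j - (Pi.single i 1 : ι → ℝ) j) • z j := by
    simp [Finset.smul_sum, sub_smul, mul_smul, Pi.single_apply, ite_smul]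
  rw [hsub]
  refine sum_smul_mem_smul_convexHull (fun j _ => ?_) ?_ (by exact_mod_cast hn)
    fun j _ => hzV ⟨j, rfl⟩
  · rcases eq_or_ne j i with rfl | hji
    · rwa [Pi.single_eq_same, sub_nonneg]
    · rw [Pi.single_eq_of_ne hji, sub_zero]
      exact mul_nonneg (Nat.cast_nonneg _) (hw j).le
  · rw [Finset.sum_sub_distrib, hsum, Finset.sum_pi_single', if_pos (Finset.mem_univ i)]
    push_cast
    ring

theorem finrank_vectorSpan_lt_of_interior_convexHull_eq_empty {E : Type*} [NormedAddCommGroup E]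
    [NormedSpace ℝ E] [FiniteDimensional ℝ E] {V : Set E} (hV : V.Nonempty)
    (h : interior (convexHull ℝ V) = ∅) :
    Module.finrank ℝ (vectorSpan ℝ V) < Module.finrank ℝ E := by
  refine Submodule.finrank_lt fun htop => ?_
  rw [← Set.not_nonempty_iff_eq_empty, interior_convexHull_nonempty_iff_affineSpan_eq_top] at h
  exact h ((AffineSubspace.affineSpan_eq_top_iff_vectorSpan_eq_top_of_nonempty ℝ E E hV).2 htop)

theorem isNormalPolytope_of_forall_exists_sub_mem {d : ℕ} {P : Set (Fin d → ℝ)}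
    (h : ∀ n : ℕ, 1 ≤ n → ∀ x ∈ ((n + 1 : ℕ) : ℝ) • P, IsLatticePt x →
      ∃ v ∈ P, IsLatticePt v ∧ x - v ∈ (n : ℝ) • P) : IsNormalPolytope P := by
  intro n hn
  induction n, hn using Nat.le_induction with
  | base => exact fun x hx hxlat => ⟨fun _ => x, fun _ => ⟨by simpa using hx, hxlat⟩, by simp⟩
  | succ n hn ih =>
    intro x hx hxlat
    obtain ⟨v, hv, hvlat, hxv⟩ := h n hn x hx hxlat
    obtain ⟨f, hf, hsum⟩ := ih _ hxv (hxlat.sub hvlat)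
    exact ⟨Fin.cons v f, Fin.cases ⟨hv, hvlat⟩ hf, by
      rw [Fin.sum_cons, ← hsum, add_sub_cancel]⟩

theorem FanRefines.exists_sub_mem_smul_add_smul {F G : Set (Fin 2 → ℝ)} (href : FanRefines F G)
    (hF : IsLatticePolytope F) (hG : IsLatticePolytope G) (hint : (interior F).Nonempty)
    {p q : ℕ} (hp : 1 ≤ p) {m : Fin 2 → ℝ} (hm : IsLatticePt m)
    (hmFG : m ∈ (p : ℝ) • F + ((q + 1 : ℕ) : ℝ) • G) :
    ∃ y ∈ G, IsLatticePt y ∧ m - y ∈ (p : ℝ) • F + (q : ℝ) • G := by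
  have hp0 : (0 : ℝ) < p := by exact_mod_cast hp
  have hint' : (interior ((p : ℝ) • F)).Nonempty := by
    rw [interior_smul₀ hp0.ne']
    exact hint.smul_set
  rw [natCast_succ_smul_of_convex hG.convex, ← add_assoc] at hmFG
  exact ((href.smul_left hp0).add_left _).exists_isLatticePt_mem_sub_mem
    ((hF.natCast_smul p).add (hG.natCast_smul q)) hG
    ((hint'.add (hG.natCast_smul q).nonempty).mono subset_interior_add_left) hm hmFG

theorem IsLatticePolytope.exists_sub_mem_smul {P : Set (Fin 2 → ℝ)} (hP : IsLatticePolytope P)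
    {n : ℕ} (hn : 1 ≤ n) {m : Fin 2 → ℝ} (hm : IsLatticePt m)
    (hmP : m ∈ ((n + 1 : ℕ) : ℝ) • P) : ∃ y ∈ P, IsLatticePt y ∧ m - y ∈ (n : ℝ) • P := by
  rcases (interior P).eq_empty_or_nonempty with hint | hint
  · obtain ⟨V, hVne, hV, rfl⟩ := hP
    have hdim := finrank_vectorSpan_lt_of_interior_convexHull_eq_empty hVne hint
    rw [Module.finrank_fin_fun] at hdim
    obtain ⟨y, hy, hmy⟩ := exists_sub_mem_smul_convexHull_of_finrank_le hn
      ((Nat.le_of_lt_succ hdim).trans hn) hmP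
    exact ⟨y, subset_convexHull ℝ _ hy, hV y hy, hmy⟩
  · have hzero : ((0 : ℕ) : ℝ) • P = 0 := by rw [Nat.cast_zero, Set.zero_smul_set hP.nonempty]
    have hone : ((0 + 1 : ℕ) : ℝ) • P = P := by rw [zero_add, Nat.cast_one, one_smul]
    rw [natCast_succ_smul_of_convex hP.convex] at hmP
    simpa only [hzero, add_zero] using (FanRefines.refl P).exists_sub_mem_smul_add_smul hP hP hint
      hn hm (q := 0) (hone.symm ▸ hmP)

section Cayley

variable {F G : Set (Fin 2 → ℝ)}

theorem emb_add (u v : Fin 2 → ℝ) (s t : ℝ) : emb (u + v) (s + t) = emb u s + emb v t := by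
  simp [emb]

theorem emb_smul (c : ℝ) (v : Fin 2 → ℝ) (t : ℝ) : emb (c • v) (c * t) = c • emb v t := by
  simp [emb]

theorem emb_sub (u v : Fin 2 → ℝ) (s t : ℝ) : emb (u - v) (s - t) = emb u s - emb v t := by
  simp [emb]

theorem isLatticePt_emb {v : Fin 2 → ℝ} {t : ℝ} :
    IsLatticePt (emb v t) ↔ IsLatticePt v ∧ ∃ z : ℤ, t = z := by
  simp [IsLatticePt, emb, Fin.forall_fin_succ, and_assoc]

theorem convex_image_emb (hF : Convex ℝ F) (t : ℝ) : Convex ℝ ((fun v => emb v t) '' F) := by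
  rintro _ ⟨u, hu, rfl⟩ _ ⟨v, hv, rfl⟩ a b ha hb hab
  refine ⟨a • u + b • v, hF hu hv ha hb hab, ?_⟩
  dsimp only
  rw [← emb_smul, ← emb_smul, ← emb_add, ← add_mul, hab, one_mul]

theorem emb_zero_mem_cayley {f : Fin 2 → ℝ} (hf : f ∈ F) : emb f 0 ∈ cayley F G :=
  subset_convexHull ℝ _ (.inl ⟨f, hf, rfl⟩)

theorem emb_one_mem_cayley {g : Fin 2 → ℝ} (hg : g ∈ G) : emb g 1 ∈ cayley F G :=
  subset_convexHull ℝ _ (.inr ⟨g, hg, rfl⟩)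

theorem emb_mem_smul_cayley {p q : ℝ} (hp : 0 ≤ p) (hq : 0 ≤ q) {v : Fin 2 → ℝ}
    (hv : v ∈ p • F + q • G) : emb v q ∈ (p + q) • cayley F G := by
  obtain ⟨_, ⟨f, hf, rfl⟩, _, ⟨g, hg, rfl⟩, rfl⟩ := hv
  rw [cayley, (convex_convexHull ℝ _).add_smul hp hq]
  refine ⟨p • emb f 0, Set.smul_mem_smul_set (emb_zero_mem_cayley hf),
    q • emb g 1, Set.smul_mem_smul_set (emb_one_mem_cayley hg), ?_⟩
  simp only [← emb_smul, ← emb_add, mul_zero, mul_one, zero_add]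

theorem exists_emb_eq_of_mem_smul_cayley (hF : Convex ℝ F) (hG : Convex ℝ G) (hF0 : F.Nonempty)
    (hG0 : G.Nonempty) {c : ℝ} (hc : 0 ≤ c) {x : Fin 3 → ℝ} (hx : x ∈ c • cayley F G) :
    ∃ p q : ℝ, 0 ≤ p ∧ 0 ≤ q ∧ p + q = c ∧ ∃ v ∈ p • F + q • G, emb v q = x := by
  obtain ⟨y, hy, rfl⟩ := hx
  rw [cayley, (convex_image_emb hF 0).convexHull_union (convex_image_emb hG 1) (hF0.image _)
    (hG0.image _)] at hy
  obtain ⟨_, ⟨f, hf, rfl⟩, _, ⟨g, hg, rfl⟩, a, b, ha, hb, hab, rfl⟩ := mem_convexJoin.1 hy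
  refine ⟨c * a, c * b, mul_nonneg hc ha, mul_nonneg hc hb, by rw [← mul_add, hab, mul_one],
    (c * a) • f + (c * b) • g, Set.add_mem_add (Set.smul_mem_smul_set hf)
      (Set.smul_mem_smul_set hg), ?_⟩
  simp only [smul_add, smul_smul, ← emb_smul, ← emb_add, mul_zero, mul_one, zero_add]

theorem exists_natCast_emb_eq_of_mem_smul_cayley (hF : Convex ℝ F) (hG : Convex ℝ G)
    (hF0 : F.Nonempty) (hG0 : G.Nonempty) {n : ℕ} {x : Fin 3 → ℝ} (hlat : IsLatticePt x)
    (hx : x ∈ (n : ℝ) • cayley F G) : ∃ p q : ℕ, p + q = n ∧ ∃ m, IsLatticePt m ∧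
      m ∈ (p : ℝ) • F + (q : ℝ) • G ∧ emb m q = x := by
  obtain ⟨p, q, hp, hq, hpq, m, hm, rfl⟩ :=
    exists_emb_eq_of_mem_smul_cayley hF hG hF0 hG0 n.cast_nonneg hx
  obtain ⟨hmlat, z, rfl⟩ := isLatticePt_emb.1 hlat
  lift z to ℕ using by exact_mod_cast hq
  rw [Int.cast_natCast] at hpq hm ⊢
  obtain ⟨k, rfl⟩ := Nat.exists_eq_add_of_le'
    (show z ≤ n by exact_mod_cast (le_add_of_nonneg_left hp).trans_eq hpq)
  obtain rfl : p = k := add_right_cancel (hpq.trans (Nat.cast_add k z))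
  exact ⟨k, z, rfl, m, hmlat, hm, rfl⟩

end Cayley

theorem FanRefines.exists_sub_mem_left_or_right {F G : Set (Fin 2 → ℝ)} (href : FanRefines F G)
    (hF : IsLatticePolytope F) (hG : IsLatticePolytope G) (hint : (interior F).Nonempty)
    {p q : ℕ} (hpq : 2 ≤ p + q) {m : Fin 2 → ℝ} (hm : IsLatticePt m)
    (hmFG : m ∈ (p : ℝ) • F + (q : ℝ) • G) :
    (∃ y ∈ F, IsLatticePt y ∧ ∃ k, p = k + 1 ∧ m - y ∈ (k : ℝ) • F + (q : ℝ) • G) ∨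
      ∃ y ∈ G, IsLatticePt y ∧ ∃ k, q = k + 1 ∧ m - y ∈ (p : ℝ) • F + (k : ℝ) • G := by
  rcases q with _ | q
  · obtain ⟨k, rfl⟩ : ∃ k, p = k + 1 := ⟨p - 1, by omega⟩
    rw [Nat.cast_zero, Set.zero_smul_set hG.nonempty, add_zero] at hmFG
    obtain ⟨y, hy, hylat, hmy⟩ := hF.exists_sub_mem_smul (by omega) hm hmFG
    refine .inl ⟨y, hy, hylat, k, rfl, ?_⟩
    rwa [Nat.cast_zero, Set.zero_smul_set hG.nonempty, add_zero]
  right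
  rcases p with _ | p
  · rw [Nat.cast_zero, Set.zero_smul_set hF.nonempty, zero_add] at hmFG
    obtain ⟨y, hy, hylat, hmy⟩ := hG.exists_sub_mem_smul (by omega) hm hmFG
    refine ⟨y, hy, hylat, q, rfl, ?_⟩
    rwa [Nat.cast_zero, Set.zero_smul_set hF.nonempty, zero_add]
  · obtain ⟨y, hy, hylat, hmy⟩ :=
      href.exists_sub_mem_smul_add_smul hF hG hint (Nat.le_add_left 1 p) hm hmFG
    exact ⟨y, hy, hylat, q, rfl, hmy⟩

theorem stmt3_general (F G : Set (Fin 2 → ℝ))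
    (hF : IsLatticePolytope F) (hG : IsLatticePolytope G)
    (hFdim : (interior F).Nonempty) (href : FanRefines F G) :
    IsNormalPolytope (cayley F G) := by
  refine isNormalPolytope_of_forall_exists_sub_mem fun n hn x hx hlat => ?_
  obtain ⟨p, q, hpq, m, hm, hmFG, rfl⟩ := exists_natCast_emb_eq_of_mem_smul_cayley
    hF.convex hG.convex hF.nonempty hG.nonempty hlat hx
  obtain ⟨y, hy, hylat, k, rfl, hmy⟩ | ⟨y, hy, hylat, k, rfl, hmy⟩ :=
    href.exists_sub_mem_left_or_right hF hG hFdim (by omega) hm hmFG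
  · obtain rfl : n = k + q := by omega
    refine ⟨emb y 0, emb_zero_mem_cayley hy, isLatticePt_emb.2 ⟨hylat, 0, Int.cast_zero.symm⟩, ?_⟩
    rw [← emb_sub, sub_zero, Nat.cast_add]
    exact emb_mem_smul_cayley k.cast_nonneg q.cast_nonneg hmy
  · obtain rfl : n = p + k := by omega
    refine ⟨emb y 1, emb_one_mem_cayley hy, isLatticePt_emb.2 ⟨hylat, 1, Int.cast_one.symm⟩, ?_⟩
    rw [← emb_sub, Nat.cast_add_one, add_sub_cancel_right, Nat.cast_add]
    exact emb_mem_smul_cayley p.cast_nonneg k.cast_nonneg hmy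

/-- Cayley polytopes of an ample/nef pair of polygons on a smooth toric surface are normal. -/
theorem stmt3 (F G : Set (Fin 2 → ℝ))
    (hF : IsLatticePolytope F) (hG : IsLatticePolytope G)
    (hFdim : (interior F).Nonempty) (hFsm : IsSmoothPolygon F)
    (href : FanRefines F G) :
    IsNormalPolytope (cayley F G) :=
  stmt3_general F G hF hG hFdim href
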